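/- arXiv:0707.0425 — 2 statements merged into one kernel-verified Lean document; each statement's English description precedes it below -/
import Mathlib

section
/- For the Gaussian weight e^{-N|z|²/t₀} on ℂ with orthonormal polynomials q_{n,N}(z) = sqrt(N^{n+1}/(π t₀^{n+1} n!)) z^n, the probability of exactly n of N eigenvalues in the disc of radius λ = sqrt(x/N) around 0 equals (∏_{i=1}^N Σ_i(x)) Σ_{i_1<…<i_n} ∏_{j=1}^n (1 - Σ_{i_j}(x))/Σ_{i_j}(x), where Σ_i(x) = e^{-x/t₀} Σ_{j=0}^{i-1} x^j/(j! t₀^j). -/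
open MeasureTheory

/-!
With `φ_k(z) = e^{-a|z|²/2} z^k` and `a = N/t₀`, the unnormalized eigenvalue density is
`|det (φ_j(z_i))|²`. A rotation by `c` multiplies `φ_k` by `c ^ k`, so the `φ_k` are orthogonal on
the disc as well as on its complement. Expanding the two determinants, the integral over any product
of discs and complements therefore collapses to the permanent of the matrix of squared norms, whose
columns are of only two kinds. Averaging over the placement of the `n` discs turns this permanent
into a sum over `n`-subsets: the number of eigenvalues in the disc is distributed as a sum of
independent Bernoulli variables of parameters `1 - Σ_i(x)`.
-/

section Combinatorics

open Finset Matrix Pointwise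

theorem card_mul_sum_smul {G X R : Type*} [Group G] [Fintype G] [Fintype X] [MulAction G X]
    [MulAction.IsPretransitive G X] [Semiring R] (f : X → R) (x : X) :
    Fintype.card X * ∑ g : G, f (g • x) = Fintype.card G * ∑ y, f y := by
  have sum_smul_eq (y : X) : ∑ g : G, f (g • y) = ∑ g : G, f (g • x) := by
    obtain ⟨h, rfl⟩ := MulAction.exists_smul_eq G x y
    exact Fintype.sum_equiv (Equiv.mulRight h) _ _ fun g ↦ by simp [mul_smul]
  calc (Fintype.card X : R) * ∑ g : G, f (g • x)
      = ∑ y, ∑ g : G, f (g • y) := by simp [sum_smul_eq]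
    _ = ∑ g : G, ∑ y, f (g • y) := sum_comm
    _ = Fintype.card G * ∑ y, f y := by
      have sum_smul (g : G) : ∑ y, f (g • y) = ∑ y, f y :=
        Equiv.sum_comp (MulAction.toPerm g) f
      simp [sum_smul]

variable {ι R : Type*} [Fintype ι] [DecidableEq ι]

theorem choose_mul_sum_perm_smul [Semiring R] (f : Finset ι → R) (A : Finset ι) :
    (Fintype.card ι).choose #A * ∑ σ : Equiv.Perm ι, f (σ • A) =
      (Fintype.card ι).factorial * ∑ s ∈ powersetCard #A univ, f s := by
  have : MulAction.IsPretransitive (Equiv.Perm ι) (Set.powersetCard ι #A) :=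
    Set.powersetCard.isPretransitive ..
  have h := card_mul_sum_smul (G := Equiv.Perm ι) (fun s : Set.powersetCard ι #A ↦ f s) ⟨A, rfl⟩
  rw [← Nat.card_eq_fintype_card, Set.powersetCard.card, Nat.card_eq_fintype_card,
    Fintype.card_perm] at h
  have mem_iff (s : Finset ι) : s ∈ powersetCard #A univ ↔ s ∈ Set.powersetCard ι #A := by
    simp
  rw [sum_subtype _ mem_iff]
  exact h

theorem permanent_ite_mem [CommSemiring R] (A : Finset ι) (p q : ι → R) :
    permanent (of fun k i ↦ if i ∈ A then p k else q k) =
      ∑ σ : Equiv.Perm ι, (∏ k ∈ σ • A, p k) * ∏ k ∈ (σ • A)ᶜ, q k := by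
  refine sum_congr rfl fun σ _ ↦ ?_
  calc ∏ i, (if i ∈ A then p (σ i) else q (σ i))
      = ∏ i, if σ i ∈ σ • A then p (σ i) else q (σ i) := by
        simp only [← Equiv.Perm.smul_def, smul_mem_smul_finset_iff]
    _ = ∏ k, if k ∈ σ • A then p k else q k :=
        Equiv.prod_comp σ fun k ↦ if k ∈ σ • A then p k else q k
    _ = (∏ k ∈ σ • A, p k) * ∏ k ∈ (σ • A)ᶜ, q k := by
        simp only [prod_ite, filter_mem_eq_inter, univ_inter, filter_notMem_eq_sdiff,
          compl_eq_univ_sdiff]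

theorem choose_mul_permanent_ite_mem [CommSemiring R] (A : Finset ι) (p q : ι → R) :
    (Fintype.card ι).choose #A * permanent (of fun k i ↦ if i ∈ A then p k else q k) =
      (Fintype.card ι).factorial *
        ∑ s ∈ powersetCard #A univ, (∏ k ∈ s, p k) * ∏ k ∈ sᶜ, q k := by
  rw [permanent_ite_mem]
  exact choose_mul_sum_perm_smul (fun s ↦ (∏ k ∈ s, p k) * ∏ k ∈ sᶜ, q k) A

theorem sum_powersetCard_prod_mul_prod_compl [Semifield R] (n : ℕ) (p q : ι → R)
    (hq : ∀ k, q k ≠ 0) :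
    ∑ s ∈ powersetCard n univ, (∏ k ∈ s, p k) * ∏ k ∈ sᶜ, q k =
      (∏ k, q k) * ∑ s ∈ powersetCard n univ, ∏ k ∈ s, p k / q k := by
  rw [mul_sum]
  refine sum_congr rfl fun s _ ↦ ?_
  have : ∏ k ∈ s, q k ≠ 0 := prod_ne_zero_iff.2 fun k _ ↦ hq k
  rw [← prod_mul_prod_compl s q, prod_div_distrib]
  field_simp

theorem sum_powersetCard_range_prod [CommSemiring R] (N n : ℕ) (f : ℕ → R) :
    ∑ s ∈ powersetCard n (range N), ∏ k ∈ s, f k =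
      ∑ s ∈ powersetCard n (univ : Finset (Fin N)), ∏ k ∈ s, f k := by
  rw [← Nat.Iio_eq_range, ← Fin.map_valEmbedding_univ, powersetCard_map]
  simp

end Combinatorics

section Andreief

open Matrix Finset ComplexConjugate

/-- The alternant matrix `(φ_k(z_i))_{k,i}`; rows are indexed by functions and columns by points,
the convention of `Matrix.det_apply'`. -/
def alternant {ι α 𝕜 : Type*} (φ : ι → α → 𝕜) (z : ι → α) : Matrix ι ι 𝕜 :=
  of fun k i ↦ φ k (z i)

variable {ι α 𝕜 : Type*} [Fintype ι] [DecidableEq ι] [MeasurableSpace α] [RCLike 𝕜]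

theorem integral_det_alternant_mul_det_alternant (μ : ι → Measure α) [∀ i, SigmaFinite (μ i)]
    {φ ψ : ι → α → 𝕜} (hint : ∀ i k l, Integrable (fun x ↦ φ k x * ψ l x) (μ i))
    (horth : ∀ i k l, k ≠ l → ∫ x, φ k x * ψ l x ∂μ i = 0) :
    ∫ z, (alternant φ z).det * (alternant ψ z).det ∂Measure.pi μ =
      permanent (of fun k i ↦ ∫ x, φ k x * ψ k x ∂μ i) := by
  let summand (σ τ : Equiv.Perm ι) (z : ι → α) : 𝕜 :=
    (σ.sign : ℤ) * (τ.sign : ℤ) * ∏ i, φ (σ i) (z i) * ψ (τ i) (z i)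
  have integrable_summand (σ τ) : Integrable (summand σ τ) (Measure.pi μ) :=
    (Integrable.fintype_prod fun i ↦ hint i (σ i) (τ i)).const_mul _
  have integral_summand (σ τ) : ∫ z, summand σ τ z ∂Measure.pi μ =
      (σ.sign : ℤ) * (τ.sign : ℤ) * ∏ i, ∫ x, φ (σ i) x * ψ (τ i) x ∂μ i := by
    rw [integral_const_mul,
      integral_fintype_prod_eq_prod fun i x ↦ φ (σ i) x * ψ (τ i) x]
  have integral_summand_of_ne {σ τ : Equiv.Perm ι} (h : τ ≠ σ) :
      ∫ z, summand σ τ z ∂Measure.pi μ = 0 := by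
    obtain ⟨i, hi⟩ := DFunLike.ne_iff.1 h
    rw [integral_summand, prod_eq_zero (mem_univ i) (horth i _ _ hi.symm), mul_zero]
  have integral_summand_self (σ) : ∫ z, summand σ σ z ∂Measure.pi μ =
      ∏ i, ∫ x, φ (σ i) x * ψ (σ i) x ∂μ i := by
    rw [integral_summand, ← Int.cast_mul, ← Units.val_mul, Int.units_mul_self]
    simp
  calc ∫ z, (alternant φ z).det * (alternant ψ z).det ∂Measure.pi μ
      = ∫ z, ∑ σ, ∑ τ, summand σ τ z ∂Measure.pi μ := by
        simp only [summand, det_apply', alternant, of_apply, sum_mul_sum, prod_mul_distrib,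
          mul_mul_mul_comm]
    _ = ∑ σ, ∑ τ, ∫ z, summand σ τ z ∂Measure.pi μ := by
        rw [integral_finsetSum _ fun σ _ ↦
          integrable_finsetSum _ fun τ _ ↦ integrable_summand σ τ]
        exact sum_congr rfl fun σ _ ↦ integral_finsetSum _ fun τ _ ↦ integrable_summand σ τ
    _ = ∑ σ, ∫ z, summand σ σ z ∂Measure.pi μ :=
        sum_congr rfl fun σ _ ↦ Fintype.sum_eq_single σ fun τ h ↦ integral_summand_of_ne h
    _ = permanent (of fun k i ↦ ∫ x, φ k x * ψ k x ∂μ i) := by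
        simp only [integral_summand_self, permanent, of_apply]

theorem integral_norm_det_alternant_sq (μ : ι → Measure α) [∀ i, SigmaFinite (μ i)]
    {φ : ι → α → 𝕜} (hφ : ∀ i k, MemLp (φ k) 2 (μ i))
    (horth : ∀ i k l, k ≠ l → ∫ x, φ k x * conj (φ l x) ∂μ i = 0) :
    ∫ z, ‖(alternant φ z).det‖ ^ 2 ∂Measure.pi μ =
      permanent (of fun k i ↦ ∫ x, ‖φ k x‖ ^ 2 ∂μ i) := by
  have det_conj (z : ι → α) :
      (alternant (fun k x ↦ conj (φ k x)) z).det = conj (alternant φ z).det :=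
    (RingHom.map_det (starRingEnd 𝕜) (alternant φ z)).symm
  have h := integral_det_alternant_mul_det_alternant μ (ψ := fun k x ↦ conj (φ k x))
    (fun i k l ↦ (hφ i k).integrable_mul (hφ i l).star) horth
  simp only [det_conj, RCLike.mul_conj, ← RCLike.ofReal_pow, integral_ofReal] at h
  rw [← RCLike.ofReal_inj (K := 𝕜), h]
  simp [permanent]

theorem choose_mul_integral_norm_det_alternant_sq (μ ν : Measure α) [SigmaFinite μ] [SigmaFinite ν]
    {φ : ι → α → 𝕜} (hφμ : ∀ k, MemLp (φ k) 2 μ) (hφν : ∀ k, MemLp (φ k) 2 ν)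
    (horthμ : ∀ k l, k ≠ l → ∫ x, φ k x * conj (φ l x) ∂μ = 0)
    (horthν : ∀ k l, k ≠ l → ∫ x, φ k x * conj (φ l x) ∂ν = 0) (A : Finset ι) :
    (Fintype.card ι).choose #A *
        ∫ z, ‖(alternant φ z).det‖ ^ 2 ∂Measure.pi (fun i ↦ if i ∈ A then μ else ν) =
      (Fintype.card ι).factorial * ∑ s ∈ powersetCard #A univ,
        (∏ k ∈ s, ∫ x, ‖φ k x‖ ^ 2 ∂μ) * ∏ k ∈ sᶜ, ∫ x, ‖φ k x‖ ^ 2 ∂ν := by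
  have (i : ι) : SigmaFinite (if i ∈ A then μ else ν) := by split_ifs <;> infer_instance
  rw [← choose_mul_permanent_ite_mem, integral_norm_det_alternant_sq]
  · congr! 4 with k
    ext i
    split_ifs <;> rfl
  · intro i k
    split_ifs
    exacts [hφμ k, hφν k]
  · intro i k l hkl
    split_ifs
    exacts [horthμ k l hkl, horthν k l hkl]

theorem choose_mul_setIntegral_norm_det_alternant_sq_div (μ : Measure α) [SigmaFinite μ]
    {φ : ι → α → 𝕜} (hφ : ∀ k, MemLp (φ k) 2 μ) {S : Set α} (hS : MeasurableSet S)
    (horth : ∀ k l, k ≠ l → ∫ x in S, φ k x * conj (φ l x) ∂μ = 0)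
    (horth_compl : ∀ k l, k ≠ l → ∫ x in Sᶜ, φ k x * conj (φ l x) ∂μ = 0) (A : Finset ι) :
    (Fintype.card ι).choose #A *
        ((∫ z in Set.univ.pi fun i ↦ if i ∈ A then S else Sᶜ,
            ‖(alternant φ z).det‖ ^ 2 ∂Measure.pi fun _ ↦ μ) /
          ∫ z, ‖(alternant φ z).det‖ ^ 2 ∂Measure.pi fun _ ↦ μ) =
      ∑ s ∈ powersetCard #A univ,
        (∏ k ∈ s, (∫ x in S, ‖φ k x‖ ^ 2 ∂μ) / ∫ x, ‖φ k x‖ ^ 2 ∂μ) *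
          ∏ k ∈ sᶜ, (∫ x in Sᶜ, ‖φ k x‖ ^ 2 ∂μ) / ∫ x, ‖φ k x‖ ^ 2 ∂μ := by
  have horth_univ (k l : ι) (hkl : k ≠ l) : ∫ x, φ k x * conj (φ l x) ∂μ = 0 := by
    have integrable_mul_conj : Integrable (fun x ↦ φ k x * conj (φ l x)) μ :=
      (hφ k).integrable_mul (hφ l).star
    rw [← integral_add_compl hS integrable_mul_conj, horth k l hkl, horth_compl k l hkl, add_zero]
  have hpart := choose_mul_integral_norm_det_alternant_sq (μ.restrict S) (μ.restrict Sᶜ)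
    (fun k ↦ (hφ k).restrict S) (fun k ↦ (hφ k).restrict Sᶜ) horth horth_compl A
  have htotal := choose_mul_integral_norm_det_alternant_sq μ μ hφ hφ horth_univ horth_univ ∅
  simp only [card_empty, Nat.choose_zero_right, Nat.cast_one, one_mul, powersetCard_zero,
    sum_singleton, prod_empty, compl_empty, ite_self] at htotal
  rw [Measure.restrict_pi_pi, ← mul_div_assoc]
  simp only [apply_ite μ.restrict]
  rw [hpart, htotal, mul_div_mul_left _ _ (by positivity), sum_div]
  refine sum_congr rfl fun s _ ↦ ?_
  rw [prod_div_distrib, prod_div_distrib, div_mul_div_comm, prod_mul_prod_compl]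

end Andreief

section Rotation

open ComplexConjugate

theorem integral_eq_zero_of_comp_mul_left_eq_smul {E : Type*} [NormedAddCommGroup E]
    [NormedSpace ℂ E] {f : ℂ → E} {c w : ℂ} (hc : ‖c‖ = 1) (hw : w ≠ 1)
    (hf : ∀ z, f (c * z) = w • f z) : ∫ z, f z = 0 := by
  let rot := rotation ⟨c, mem_sphere_zero_iff_norm.2 hc⟩
  have integral_eq : ∫ z, f z = w • ∫ z, f z :=
    calc ∫ z, f z = ∫ z, f (rot z) :=
          (rot.measurePreserving.integral_comp rot.toHomeomorph.measurableEmbedding f).symm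
      _ = w • ∫ z, f z := by
          rw [← integral_smul]
          exact integral_congr_ae (.of_forall hf)
  by_contra h
  exact hw (smul_left_injective ℂ h (by simpa using integral_eq.symm))

theorem exists_norm_eq_one_and_pow_ne_pow {k l : ℕ} (hkl : k ≠ l) :
    ∃ c : ℂ, ‖c‖ = 1 ∧ c ^ k ≠ c ^ l := by
  have hc := Complex.isPrimitiveRoot_exp (k + l + 1) (by omega)
  exact ⟨_, hc.norm'_eq_one (by omega), fun h ↦ hkl (hc.pow_inj (by omega) (by omega) h)⟩

theorem setIntegral_mul_conj_eq_zero_of_rotation {S : Set ℂ} (hS : MeasurableSet S)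
    (hrot : ∀ c z, ‖c‖ = 1 → (c * z ∈ S ↔ z ∈ S)) {k l : ℕ} (hkl : k ≠ l) {f g : ℂ → ℂ}
    (hf : ∀ c z, ‖c‖ = 1 → f (c * z) = c ^ k * f z)
    (hg : ∀ c z, ‖c‖ = 1 → g (c * z) = c ^ l * g z) :
    ∫ z in S, f z * conj (g z) = 0 := by
  obtain ⟨c, hc, hpow⟩ := exists_norm_eq_one_and_pow_ne_pow hkl
  have hcl : c ^ l * conj (c ^ l) = 1 := by
    rw [Complex.mul_conj', norm_pow, hc]
    norm_num
  have hw : c ^ k * conj (c ^ l) ≠ 1 := fun h ↦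
    hpow (mul_right_cancel₀ (right_ne_zero_of_mul_eq_one hcl) (h.trans hcl.symm))
  rw [← integral_indicator hS]
  refine integral_eq_zero_of_comp_mul_left_eq_smul hc hw fun z ↦ ?_
  by_cases hz : z ∈ S
  · rw [Set.indicator_of_mem ((hrot c z hc).2 hz), Set.indicator_of_mem hz,
      hf c z hc, hg c z hc, map_mul, smul_eq_mul]
    ring
  · rw [Set.indicator_of_notMem (mt (hrot c z hc).1 hz), Set.indicator_of_notMem hz, smul_zero]

end Rotation

noncomputable section RadialIntegrals

/-- The probability that a Poisson variable of mean `u` is less than `k`, so that the `Σ_k(x)` of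
the statement is `poissonLowerTail k (x / t₀)`. -/
def poissonLowerTail (k : ℕ) (u : ℝ) : ℝ :=
  Real.exp (-u) * ∑ j ∈ Finset.range k, u ^ j / j.factorial

theorem poissonLowerTail_succ_pos (k : ℕ) {u : ℝ} (hu : 0 ≤ u) :
    0 < poissonLowerTail (k + 1) u := by
  rw [poissonLowerTail, Finset.sum_range_succ']
  positivity

theorem poissonLowerTail_succ_zero (k : ℕ) : poissonLowerTail (k + 1) 0 = 1 := by
  simp [poissonLowerTail, Finset.sum_range_succ']

theorem hasDerivAt_poissonLowerTail_succ (k : ℕ) (u : ℝ) :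
    HasDerivAt (poissonLowerTail (k + 1)) (-(Real.exp (-u) * (u ^ k / k.factorial))) u := by
  have hasDerivAt_exp : HasDerivAt (fun u : ℝ ↦ Real.exp (-u)) (-Real.exp (-u)) u := by
    simpa using (hasDerivAt_neg u).exp
  induction k with
  | zero =>
    have hone : poissonLowerTail (0 + 1) = fun u ↦ Real.exp (-u) := by
      ext u
      simp [poissonLowerTail]
    simpa [hone] using hasDerivAt_exp
  | succ k ih =>
    have hsucc : poissonLowerTail (k + 1 + 1) = fun u ↦
        poissonLowerTail (k + 1) u + Real.exp (-u) * (u ^ (k + 1) / (k + 1).factorial) := by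
      ext u
      rw [poissonLowerTail, Finset.sum_range_succ, mul_add, poissonLowerTail]
    rw [hsucc]
    refine (ih.add (hasDerivAt_exp.mul ((hasDerivAt_pow (k + 1) u).div_const _))).congr_deriv ?_
    rw [Nat.factorial_succ]
    push_cast
    field_simp
    simp

theorem tendsto_poissonLowerTail_atTop (k : ℕ) :
    Filter.Tendsto (poissonLowerTail k) Filter.atTop (nhds 0) := by
  have hterm (j : ℕ) :
      Filter.Tendsto (fun u : ℝ ↦ Real.exp (-u) * (u ^ j / j.factorial)) Filter.atTop (nhds 0) := by
    have h := (Real.tendsto_pow_mul_exp_neg_atTop_nhds_zero j).div_const (j.factorial : ℝ)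
    rw [zero_div] at h
    exact h.congr fun u ↦ by ring
  unfold poissonLowerTail
  simpa [Finset.mul_sum] using tendsto_finsetSum (Finset.range k) fun j _ ↦ hterm j

theorem integral_Ioi_pow_mul_exp_neg_mul_sq {a : ℝ} (ha : 0 < a) (k : ℕ) {L : ℝ} (hL : 0 ≤ L) :
    ∫ r in Set.Ioi L, r ^ (2 * k + 1) * Real.exp (-a * r ^ 2) =
      k.factorial / (2 * a ^ (k + 1)) * poissonLowerTail (k + 1) (a * L ^ 2) := by
  have hderiv (r : ℝ) : HasDerivAt
      (fun r ↦ -(k.factorial / (2 * a ^ (k + 1)) * poissonLowerTail (k + 1) (a * r ^ 2)))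
      (r ^ (2 * k + 1) * Real.exp (-a * r ^ 2)) r := by
    refine (((hasDerivAt_poissonLowerTail_succ k (a * r ^ 2)).comp r
      ((hasDerivAt_pow 2 r).const_mul a)).const_mul _).neg.congr_deriv ?_
    rw [neg_mul a]
    field_simp
    ring
  have hlim := (((tendsto_poissonLowerTail_atTop (k + 1)).comp
    ((Filter.tendsto_pow_atTop two_ne_zero).const_mul_atTop ha)).const_mul
      (k.factorial / (2 * a ^ (k + 1)))).neg
  rw [integral_Ioi_of_hasDerivAt_of_nonneg' (fun r _ ↦ hderiv r) _ hlim]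
  · simp
  · intro r hr
    have : 0 < r := hL.trans_lt hr
    positivity

theorem integral_comp_norm_complex {E : Type*} [NormedAddCommGroup E] [NormedSpace ℝ E]
    (f : ℝ → E) : ∫ z : ℂ, f ‖z‖ = (2 * Real.pi) • ∫ r in Set.Ioi (0 : ℝ), r • f r := by
  rw [integral_fun_norm_addHaar]
  simp [Measure.real, Complex.volume_ball, mul_smul, two_smul]

end RadialIntegrals

noncomputable section GaussianMonomial

/-- The monomial `z ^ k` times the square root of the weight `e^{-a|z|²}`. For `a = N/t₀` this is
the orthonormal polynomial `q_{k,N}` with its share of the weight, up to normalization. -/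
def gaussianMonomial (a : ℝ) (k : ℕ) (z : ℂ) : ℂ :=
  Real.exp (-(a / 2) * ‖z‖ ^ 2) * z ^ k

variable {a : ℝ}

theorem continuous_gaussianMonomial (a : ℝ) (k : ℕ) : Continuous (gaussianMonomial a k) := by
  unfold gaussianMonomial
  fun_prop

theorem norm_gaussianMonomial_sq (a : ℝ) (k : ℕ) (z : ℂ) :
    ‖gaussianMonomial a k z‖ ^ 2 = Real.exp (-a * ‖z‖ ^ 2) * ‖z‖ ^ (2 * k) := by
  rw [gaussianMonomial, norm_mul, norm_pow, Complex.norm_real, Real.norm_of_nonneg (by positivity),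
    mul_pow, ← Real.exp_nat_mul, ← pow_mul, mul_comm k]
  push_cast
  ring_nf

theorem gaussianMonomial_mul (a : ℝ) (k : ℕ) (c z : ℂ) (hc : ‖c‖ = 1) :
    gaussianMonomial a k (c * z) = c ^ k * gaussianMonomial a k z := by
  rw [gaussianMonomial, gaussianMonomial, norm_mul, hc, one_mul, mul_pow, mul_left_comm]

theorem setIntegral_compl_ball_norm_gaussianMonomial_sq (ha : 0 < a) (k : ℕ) {L : ℝ} (hL : 0 ≤ L) :
    ∫ z in (Metric.ball (0 : ℂ) L)ᶜ, ‖gaussianMonomial a k z‖ ^ 2 =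
      Real.pi * k.factorial / a ^ (k + 1) * poissonLowerTail (k + 1) (a * L ^ 2) := by
  have hpolar : ∫ z in (Metric.ball (0 : ℂ) L)ᶜ, ‖gaussianMonomial a k z‖ ^ 2 =
      2 * Real.pi * ∫ r in Set.Ioi 0, (Set.Ici L).indicator
        (fun r ↦ r ^ (2 * k + 1) * Real.exp (-a * r ^ 2)) r := by
    rw [← integral_indicator measurableSet_ball.compl]
    convert integral_comp_norm_complex ((Set.Ici L).indicator
      fun r ↦ Real.exp (-a * r ^ 2) * r ^ (2 * k)) using 3 with z
    · by_cases hz : L ≤ ‖z‖ <;> simp [hz, norm_gaussianMonomial_sq]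
    · refine congrArg (2 * Real.pi * ·) (integral_congr_ae (.of_forall fun r ↦ ?_))
      by_cases hr : L ≤ r
      · simp [hr]
        ring
      · simp [hr]
  have hinter : (Set.Ioi 0 ∩ Set.Ici L : Set ℝ) =ᵐ[volume] Set.Ioi L := by
    simpa [Set.inter_eq_right.2 (Set.Ioi_subset_Ioi hL)] using
      (ae_eq_refl (Set.Ioi (0 : ℝ))).inter (Ioi_ae_eq_Ici (a := L)).symm
  rw [hpolar, setIntegral_indicator measurableSet_Ici, setIntegral_congr_set hinter,
    integral_Ioi_pow_mul_exp_neg_mul_sq ha k hL]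
  field_simp

theorem integral_norm_gaussianMonomial_sq (ha : 0 < a) (k : ℕ) :
    ∫ z, ‖gaussianMonomial a k z‖ ^ 2 = Real.pi * k.factorial / a ^ (k + 1) := by
  simpa [poissonLowerTail_succ_zero] using
    setIntegral_compl_ball_norm_gaussianMonomial_sq ha k le_rfl

theorem integral_norm_gaussianMonomial_sq_pos (ha : 0 < a) (k : ℕ) :
    0 < ∫ z, ‖gaussianMonomial a k z‖ ^ 2 := by
  rw [integral_norm_gaussianMonomial_sq ha]
  positivity

theorem memLp_gaussianMonomial (ha : 0 < a) (k : ℕ) : MemLp (gaussianMonomial a k) 2 :=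
  (memLp_two_iff_integrable_sq_norm (continuous_gaussianMonomial a k).aestronglyMeasurable).2
    (.of_integral_ne_zero (integral_norm_gaussianMonomial_sq_pos ha k).ne')

theorem setIntegral_compl_ball_norm_gaussianMonomial_sq_div (ha : 0 < a) (k : ℕ) {L : ℝ}
    (hL : 0 ≤ L) :
    (∫ z in (Metric.ball (0 : ℂ) L)ᶜ, ‖gaussianMonomial a k z‖ ^ 2) /
      ∫ z, ‖gaussianMonomial a k z‖ ^ 2 = poissonLowerTail (k + 1) (a * L ^ 2) := by
  rw [setIntegral_compl_ball_norm_gaussianMonomial_sq ha k hL,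
    ← integral_norm_gaussianMonomial_sq ha,
    mul_div_cancel_left₀ _ (integral_norm_gaussianMonomial_sq_pos ha k).ne']

theorem setIntegral_ball_norm_gaussianMonomial_sq_div (ha : 0 < a) (k : ℕ) {L : ℝ} (hL : 0 ≤ L) :
    (∫ z in Metric.ball (0 : ℂ) L, ‖gaussianMonomial a k z‖ ^ 2) /
      ∫ z, ‖gaussianMonomial a k z‖ ^ 2 = 1 - poissonLowerTail (k + 1) (a * L ^ 2) := by
  rw [← setIntegral_compl_ball_norm_gaussianMonomial_sq_div ha k hL, eq_sub_iff_add_eq,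
    ← add_div,
    integral_add_compl measurableSet_ball (memLp_gaussianMonomial ha k).norm.integrable_sq,
    div_self (integral_norm_gaussianMonomial_sq_pos ha k).ne']

theorem norm_det_alternant_gaussianMonomial_sq (a : ℝ) {N : ℕ} (z : Fin N → ℂ) :
    ‖(alternant (fun k : Fin N ↦ gaussianMonomial a k) z).det‖ ^ 2 =
      Real.exp (-a * ∑ i, ‖z i‖ ^ 2) *
        ∏ i : Fin N, ∏ j ∈ Finset.univ.filter (fun j : Fin N => i < j), ‖z i - z j‖ ^ 2 := by
  have alternant_eq : alternant (fun k : Fin N ↦ gaussianMonomial a k) z =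
      Matrix.of fun k i ↦
        (Real.exp (-(a / 2) * ‖z i‖ ^ 2) : ℂ) * (Matrix.vandermonde z).transpose k i := rfl
  rw [alternant_eq, Matrix.det_mul_row, Matrix.det_transpose, Matrix.det_vandermonde, norm_mul,
    mul_pow, ← Complex.ofReal_prod, ← Real.exp_sum, ← Finset.mul_sum, Complex.norm_real,
    Real.norm_of_nonneg (by positivity), ← Real.exp_nat_mul]
  congr 1
  · congr 1
    push_cast
    ring
  · simp only [norm_prod, Finset.prod_pow, norm_sub_rev, Finset.filter_lt_eq_Ioi]

theorem choose_mul_setIntegral_ball_norm_det_gaussianMonomial_sq_div {N : ℕ} (ha : 0 < a) {L : ℝ}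
    (hL : 0 ≤ L) (A : Finset (Fin N)) :
    N.choose A.card *
        ((∫ z in Set.univ.pi fun i ↦ if i ∈ A then Metric.ball 0 L else (Metric.ball 0 L)ᶜ,
            ‖(alternant (fun k : Fin N ↦ gaussianMonomial a k) z).det‖ ^ 2) /
          ∫ z, ‖(alternant (fun k : Fin N ↦ gaussianMonomial a k) z).det‖ ^ 2) =
      ∑ s ∈ Finset.powersetCard A.card (Finset.univ : Finset (Fin N)),
        (∏ k ∈ s, (1 - poissonLowerTail (k + 1) (a * L ^ 2))) *
          ∏ k ∈ sᶜ, poissonLowerTail (k + 1) (a * L ^ 2) := by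
  have h := choose_mul_setIntegral_norm_det_alternant_sq_div volume
    (φ := fun k : Fin N ↦ gaussianMonomial a k) (fun k ↦ memLp_gaussianMonomial ha k)
    (measurableSet_ball (x := 0) (ε := L))
    (fun k l hkl ↦ setIntegral_mul_conj_eq_zero_of_rotation measurableSet_ball
      (fun c z hc ↦ by simp [hc]) (Fin.val_injective.ne hkl)
      (gaussianMonomial_mul a k) (gaussianMonomial_mul a l))
    (fun k l hkl ↦ setIntegral_mul_conj_eq_zero_of_rotation measurableSet_ball.compl
      (fun c z hc ↦ by simp [hc]) (Fin.val_injective.ne hkl)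
      (gaussianMonomial_mul a k) (gaussianMonomial_mul a l)) A
  simpa only [Fintype.card_fin, ← volume_pi, setIntegral_ball_norm_gaussianMonomial_sq_div ha _ hL,
    setIntegral_compl_ball_norm_gaussianMonomial_sq_div ha _ hL] using h

end GaussianMonomial

/-- For the Gaussian weight `e^{-N|z|²/t₀}` on `ℂ`, the probability of exactly `n` of `N`
eigenvalues in the disc of radius `λ = √(x/N)` around `0` equals
`(∏_{i=1}^N Σ_i(x)) Σ_{i₁<…<i_n} ∏_j (1 - Σ_{i_j}(x))/Σ_{i_j}(x)`, where
`Σ_i(x) = e^{-x/t₀} Σ_{j<i} x^j/(j! t₀^j)`. -/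
theorem stmt_6 (t₀ : ℝ) (ht₀ : 0 < t₀) (N : ℕ) (hN : 0 < N) (n : ℕ) (hn : n ≤ N)
    (x : ℝ) (hx : 0 < x) (lam : ℝ) (hlam : lam = Real.sqrt (x / N))
    (Z : ℝ)
    (hZ : Z = ∫ z : Fin N → ℂ,
        Real.exp (-((N : ℝ) / t₀) * ∑ i, ‖z i‖ ^ 2) *
          ∏ i : Fin N, ∏ j ∈ Finset.univ.filter (fun j : Fin N => i < j), ‖z i - z j‖ ^ 2)
    (P : (Fin N → ℂ) → ℝ)
    (hP : ∀ z : Fin N → ℂ, P z = Z⁻¹ *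
        Real.exp (-((N : ℝ) / t₀) * ∑ i, ‖z i‖ ^ 2) *
          ∏ i : Fin N, ∏ j ∈ Finset.univ.filter (fun j : Fin N => i < j), ‖z i - z j‖ ^ 2)
    (Sig : ℕ → ℝ)
    (hSig : ∀ i, Sig i = Real.exp (-x / t₀) *
        ∑ j ∈ Finset.range i, x ^ j / ((j.factorial : ℝ) * t₀ ^ j)) :
    (N.choose n : ℝ) *
      (∫ z in Set.univ.pi (fun i : Fin N =>
          if (i : ℕ) < n then Metric.ball (0 : ℂ) lam else (Metric.ball (0 : ℂ) lam)ᶜ), P z) =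
    (∏ i ∈ Finset.range N, Sig (i + 1)) *
      ∑ s ∈ Finset.powersetCard n (Finset.range N),
        ∏ i ∈ s, (1 - Sig (i + 1)) / Sig (i + 1) := by
  subst hlam
  have : (0 : ℝ) < N := by exact_mod_cast hN
  have rate_mul_sq : N / t₀ * Real.sqrt (x / N) ^ 2 = x / t₀ := by
    rw [Real.sq_sqrt (by positivity)]
    field_simp
  have Sig_eq (k : ℕ) : Sig k = poissonLowerTail k (x / t₀) := by
    simp only [hSig, poissonLowerTail, neg_div, div_pow, div_div, mul_comm]
  have Sig_ne_zero (k : ℕ) : Sig (k + 1) ≠ 0 :=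
    Sig_eq (k + 1) ▸ (poissonLowerTail_succ_pos k (by positivity)).ne'
  have setIntegral_P (D : Set (Fin N → ℂ)) : ∫ z in D, P z =
      (∫ z in D, ‖(alternant (fun k : Fin N ↦ gaussianMonomial (N / t₀) k) z).det‖ ^ 2) /
        ∫ z, ‖(alternant (fun k : Fin N ↦ gaussianMonomial (N / t₀) k) z).det‖ ^ 2 := by
    simp only [hP, mul_assoc, integral_const_mul, norm_det_alternant_gaussianMonomial_sq, ← hZ]
    rw [inv_mul_eq_div]
  have count := choose_mul_setIntegral_ball_norm_det_gaussianMonomial_sq_div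
    (a := N / t₀) (by positivity) (Real.sqrt_nonneg (x / N))
    (Finset.univ.filter fun i : Fin N ↦ (i : ℕ) < n)
  simp only [Finset.mem_filter_univ, Fin.card_filter_val_lt, min_eq_right hn, rate_mul_sq,
    ← Sig_eq, ← setIntegral_P] at count
  rw [count, sum_powersetCard_prod_mul_prod_compl n _ _ fun k : Fin N ↦ Sig_ne_zero k,
    sum_powersetCard_range_prod N n, Finset.prod_range]
end

section
/- If h(w) = rw + Σ_{j=0}^d a_j w^{-j} with r > 0 and a_d ≠ 0 parametrizes a positively oriented smooth simple closed curve when restricted to the unit circle, then h restricted to {|w| ≥ 1} is injective and h'(w) ≠ 0 for |w| ≥ 1; in particular h is a biholomorphism from the exterior of the unit disc onto the exterior of the curve. -/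
open Complex

/-!
In the coordinates `u = 1 / z`, `v = 1 / w`, the difference quotient `(h z - h w) / (z - w)` is a
symmetric polynomial `G(u, v)`, equal to `h' (1 / u)` on the diagonal. Simplicity and smoothness of
the curve say that `G` has no zeros on the torus `|u| = |v| = 1`, and the conclusion says that it
has none on the bidisc `|u|, |v| ≤ 1`.

By symmetry the winding number of `u ↦ G(u, u)` about `0` is twice that of each slice
`u ↦ G(u, v)`, `|v| = 1`. The former vanishes because the tangent `i w h' (w)` turns exactly once,
so by the argument principle the slices with `|v| = 1` have no zeros in the unit disc. By symmetry
again, `G(u, v) ≠ 0` for `|u| = 1`, `|v| ≤ 1`, so moving `v` from the boundary into the disc does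
not change the winding number of the slice, and no slice with `|v| ≤ 1` has a zero in the disc.
-/

section ContinuousLogarithm

variable {X : Type*} [TopologicalSpace X]

theorem exists_continuous_exp_eq [SimplyConnectedSpace X] [LocallyPathConnectedSpace X]
    {f : X → ℂ} (hf : Continuous f) (hf₀ : ∀ x, f x ≠ 0) :
    ∃ l : X → ℂ, Continuous l ∧ ∀ x, exp (l x) = f x := by
  obtain ⟨x₀⟩ : Nonempty X := inferInstance
  obtain ⟨l, ⟨-, hl⟩, -⟩ := isCoveringMapOn_exp.existsUnique_continuousMap_lifts
    ⟨f, hf⟩ (exp_log (hf₀ x₀)) hf₀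
  exact ⟨l, l.continuous, congrFun hl⟩

theorem sub_eq_sub_of_exp_eq [PreconnectedSpace X] {l m : X → ℂ} (hl : Continuous l)
    (hm : Continuous m) (h : ∀ x, exp (l x) = exp (m x)) (x y : X) : l x - m x = l y - m y :=
  isCoveringMap_exp.const_of_comp (hl.sub hm)
    (fun x y ↦ Subtype.ext (by simp [exp_sub, h])) x y

theorem hasDerivAt_of_hasDerivAt_exp {l : ℝ → ℂ} {f' : ℂ} {t : ℝ} (hl : ContinuousAt l t)
    (hexp : HasDerivAt (fun s ↦ exp (l s)) f' t) : HasDerivAt l (f' / exp (l t)) t := by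
  have hlog : HasDerivAt (fun s ↦ l t + log (exp (l s) / exp (l t))) (f' / exp (l t)) t := by
    simpa using ((hexp.div_const (exp (l t))).clog_real (by simp)).const_add (l t)
  refine hlog.congr_of_eventuallyEq ?_
  filter_upwards [hl.eventually (Metric.ball_mem_nhds (l t) Real.pi_pos)] with s hs
  have him : |(l s - l t).im| < Real.pi :=
    (abs_im_le_norm _).trans_lt (mem_ball_iff_norm.1 hs)
  rw [← exp_sub, log_exp (abs_lt.1 him).1 (abs_lt.1 him).2.le, add_sub_cancel]

theorem periodic_of_symm_of_apply_diag_eq {l : ℝ × ℝ → ℂ} (hl : Continuous l) {T : ℝ}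
    (hsymm : ∀ s t, exp (l (s, t)) = exp (l (t, s)))
    (hper : ∀ s t, exp (l (s + T, t)) = exp (l (s, t)))
    (hdiag : l (T, T) = l (0, 0)) (t : ℝ) : Function.Periodic (fun s ↦ l (s, t)) T := by
  have hl_symm (s t : ℝ) : l (s, t) = l (t, s) := by
    simpa [sub_eq_zero] using sub_eq_sub_of_exp_eq hl (hl.comp continuous_swap)
      (fun q ↦ hsymm q.1 q.2) (s, t) (0, 0)
  have hincr (s t s' t' : ℝ) : l (s + T, t) - l (s, t) = l (s' + T, t') - l (s', t') :=
    sub_eq_sub_of_exp_eq (l := fun q : ℝ × ℝ ↦ l (q.1 + T, q.2)) (by fun_prop) hl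
      (fun q ↦ hper q.1 q.2) (s, t) (s', t')
  intro s
  have htop := hincr s t 0 T
  have hbot := hincr s t 0 0
  rw [zero_add] at htop hbot
  -- The increment of `l` along the diagonal is twice its increment along a horizontal period.
  linear_combination (htop + hbot + hdiag + hl_symm T 0) / 2

end ContinuousLogarithm

section Circle

open Metric Real

variable {f : ℂ → ℂ} {c z : ℂ} {R : ℝ}

theorem ne_zero_of_exp_eq_circleMap {l : ℝ → ℂ} (hexp : ∀ t, exp (l t) = f (circleMap c R t))
    (hz : z ∈ sphere c |R|) : f z ≠ 0 := by
  obtain ⟨t, rfl⟩ := (range_circleMap c R).ge hz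
  exact hexp t ▸ exp_ne_zero _

theorem circleIntegral_logDeriv_eq_sub {l : ℝ → ℂ} (hf : AnalyticOnNhd ℂ f (sphere c |R|))
    (hl : Continuous l) (hexp : ∀ t, exp (l t) = f (circleMap c R t)) :
    ∮ z in C(c, R), logDeriv f z = l (2 * π) - l 0 := by
  have hmem := circleMap_mem_sphere' c R
  have hderiv (t : ℝ) :
      HasDerivAt l (deriv (circleMap c R) t • logDeriv f (circleMap c R t)) t := by
    have hfγ : HasDerivAt (fun s ↦ exp (l s))
        (deriv f (circleMap c R t) * deriv (circleMap c R) t) t := by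
      simp_rw [hexp]
      exact (hf _ (hmem t)).differentiableAt.hasDerivAt.comp t
        (differentiable_circleMap c R t).hasDerivAt
    convert hasDerivAt_of_hasDerivAt_exp hl.continuousAt hfγ using 1
    rw [hexp, logDeriv_apply, smul_eq_mul]
    ring
  have hint : CircleIntegrable (logDeriv f) c R :=
    (hf.deriv.continuousOn.div hf.continuousOn
      fun _ ↦ ne_zero_of_exp_eq_circleMap hexp).circleIntegrable'
  exact intervalIntegral.integral_eq_sub_of_hasDerivAt (fun t _ ↦ hderiv t) hint.out

/-- The function `f` has no zeros on the circle with center `c` and radius `|R|`, and its winding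
number about `0` along that circle is zero. This is encoded by a continuous logarithm of `f` on the
circle, written as a periodic function of the angle. -/
def HasLogOnCircle (f : ℂ → ℂ) (c : ℂ) (R : ℝ) : Prop :=
  ∃ l : ℝ → ℂ, Continuous l ∧ Function.Periodic l (2 * π) ∧ ∀ t, exp (l t) = f (circleMap c R t)

namespace HasLogOnCircle

theorem ne_zero (h : HasLogOnCircle f c R) (hz : z ∈ sphere c |R|) : f z ≠ 0 := by
  obtain ⟨l, -, -, hexp⟩ := h
  exact ne_zero_of_exp_eq_circleMap hexp hz

theorem congr {g : ℂ → ℂ} (h : HasLogOnCircle f c R) (hfg : Set.EqOn f g (sphere c |R|)) :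
    HasLogOnCircle g c R := by
  obtain ⟨l, hl, hper, hexp⟩ := h
  exact ⟨l, hl, hper, fun t ↦ (hexp t).trans (hfg (circleMap_mem_sphere' c R t))⟩

theorem comp_inv (h : HasLogOnCircle f 0 R) : HasLogOnCircle (fun z ↦ f z⁻¹) 0 R⁻¹ := by
  obtain ⟨l, hl, hper, hexp⟩ := h
  refine ⟨fun t ↦ l (-t), by fun_prop, fun t ↦ ?_, fun t ↦ ?_⟩
  · simp only [neg_add', hper.sub_eq]
  · simp only [hexp, inv_eq_iff_eq_inv.1 (circleMap_zero_inv R (-t)), neg_neg]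

theorem of_homotopy {X : Type*} [TopologicalSpace X] [PathConnectedSpace X] {F : X → ℂ → ℂ}
    (hF : Continuous fun q : X × ℝ ↦ F q.1 (circleMap c R q.2))
    (hF₀ : ∀ x, ∀ z ∈ sphere c |R|, F x z ≠ 0) {x y : X} (hx : HasLogOnCircle (F x) c R) :
    HasLogOnCircle (F y) c R := by
  have : LocallyPathConnectedSpace unitInterval := (convex_Icc 0 1).locallyPathConnectedSpace
  have : ContractibleSpace unitInterval := (convex_Icc 0 1).contractibleSpace ⟨0, by simp⟩
  let γ : Path x y := PathConnectedSpace.somePath x y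
  obtain ⟨l, hl, hexp⟩ := exists_continuous_exp_eq
    (f := fun q : unitInterval × ℝ ↦ F (γ q.1) (circleMap c R q.2))
    (hF.comp (by fun_prop : Continuous fun q : unitInterval × ℝ ↦ (γ q.1, q.2)))
    fun q ↦ hF₀ _ _ (circleMap_mem_sphere' c R q.2)
  obtain ⟨m, hm, hm_per, hm_exp⟩ := hx
  have hlm (t : ℝ) : l (0, t) - m t = l (0, 0) - m 0 :=
    sub_eq_sub_of_exp_eq (l := fun t ↦ l (0, t)) (by fun_prop) hm
      (fun t ↦ by rw [hexp, hm_exp, γ.source]) t 0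
  have hincr (t : ℝ) : l (1, t + 2 * π) - l (1, t) = l (0, 2 * π) - l (0, 0) := by
    simpa using sub_eq_sub_of_exp_eq (l := fun q : unitInterval × ℝ ↦ l (q.1, q.2 + 2 * π))
      (by fun_prop) hl (fun q ↦ by simp only [hexp, periodic_circleMap c R q.2]) (1, t) (0, 0)
  have hm_zero : m (2 * π) = m 0 := hm_per.eq
  refine ⟨fun t ↦ l (1, t), by fun_prop, fun t ↦ ?_, fun t ↦ by rw [hexp, γ.target]⟩
  linear_combination hincr t + hlm (2 * π) + hm_zero

theorem of_symm_of_diag {F : ℂ → ℂ → ℂ}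
    (hF : Continuous fun q : ℝ × ℝ ↦ F (circleMap c R q.1) (circleMap c R q.2))
    (hF₀ : ∀ z ∈ sphere c |R|, ∀ w ∈ sphere c |R|, F z w ≠ 0)
    (hsymm : ∀ z ∈ sphere c |R|, ∀ w ∈ sphere c |R|, F z w = F w z)
    (hdiag : HasLogOnCircle (fun z ↦ F z z) c R) {w : ℂ} (hw : w ∈ sphere c |R|) :
    HasLogOnCircle (fun z ↦ F z w) c R := by
  have hmem := circleMap_mem_sphere' c R
  obtain ⟨t, rfl⟩ := (range_circleMap c R).ge hw
  obtain ⟨l, hl, hexp⟩ := exists_continuous_exp_eq hF fun q ↦ hF₀ _ (hmem q.1) _ (hmem q.2)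
  obtain ⟨m, hm, hm_per, hm_exp⟩ := hdiag
  have hlm : l (2 * π, 2 * π) - m (2 * π) = l (0, 0) - m 0 :=
    sub_eq_sub_of_exp_eq (l := fun t ↦ l (t, t)) (by fun_prop) hm
      (fun t ↦ by rw [hexp, hm_exp]) (2 * π) 0
  have hm_zero : m (2 * π) = m 0 := hm_per.eq
  refine ⟨fun s ↦ l (s, t), by fun_prop, ?_, fun s ↦ hexp _⟩
  exact periodic_of_symm_of_apply_diag_eq hl
    (fun s t ↦ by rw [hexp, hexp, hsymm _ (hmem s) _ (hmem t)])
    (fun s t ↦ by simp only [hexp, periodic_circleMap c R s])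
    (by linear_combination hlm + hm_zero) t

end HasLogOnCircle

theorem hasLogOnCircle_iff_circleIntegral_logDeriv_eq_zero
    (hf : AnalyticOnNhd ℂ f (sphere c |R|)) (hf₀ : ∀ z ∈ sphere c |R|, f z ≠ 0) :
    HasLogOnCircle f c R ↔ ∮ z in C(c, R), logDeriv f z = 0 := by
  constructor
  · rintro ⟨l, hl, hper, hexp⟩
    rw [circleIntegral_logDeriv_eq_sub hf hl hexp, hper.eq, sub_self]
  · intro hint
    have hmem := circleMap_mem_sphere' c R
    obtain ⟨l, hl, hexp⟩ := exists_continuous_exp_eq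
      (hf.continuousOn.comp_continuous (continuous_circleMap c R) hmem) fun t ↦ hf₀ _ (hmem t)
    rw [circleIntegral_logDeriv_eq_sub hf hl hexp] at hint
    refine ⟨l, hl, fun t ↦ ?_, hexp⟩
    have hincr : l (t + 2 * π) - l t = l (0 + 2 * π) - l 0 :=
      sub_eq_sub_of_exp_eq (l := fun t ↦ l (t + 2 * π)) (by fun_prop) hl
        (fun t ↦ by simp only [hexp, Function.comp_apply, periodic_circleMap c R t]) t 0
    rwa [zero_add, hint, sub_eq_zero] at hincr

theorem circleIntegral_logDeriv_sub_center_mul (hR : 0 < R)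
    (hf : AnalyticOnNhd ℂ f (sphere c R)) (hf₀ : ∀ z ∈ sphere c R, f z ≠ 0) :
    ∮ z in C(c, R), logDeriv (fun z ↦ (z - c) * f z) z
      = 2 * π * I + ∮ z in C(c, R), logDeriv f z := by
  have hne (z : ℂ) (hz : z ∈ sphere c R) : z - c ≠ 0 :=
    sub_ne_zero.2 (ne_of_mem_sphere hz hR.ne')
  have hinv : CircleIntegrable (fun z : ℂ ↦ (z - c)⁻¹) c R :=
    ContinuousOn.circleIntegrable hR.le (by fun_prop (disch := assumption))
  have hlog : CircleIntegrable (logDeriv f) c R :=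
    (hf.deriv.continuousOn.div hf.continuousOn hf₀).circleIntegrable hR.le
  rw [← circleIntegral.integral_sub_center_inv c hR.ne', ← circleIntegral.integral_add hinv hlog]
  refine circleIntegral.integral_congr hR.le fun z hz ↦ ?_
  rw [logDeriv_mul z (hne z hz) (hf₀ z hz) (by fun_prop) (hf z hz).differentiableAt]
  simp [logDeriv_apply]

section Polynomial

open Polynomial

theorem circleIntegral_sub_inv_eq_zero_of_notMem_closedBall {w : ℂ} (hR : 0 ≤ R)
    (hw : w ∉ closedBall c R) : ∮ z in C(c, R), (z - w)⁻¹ = 0 := by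
  refine DiffContOnCl.circleIntegral_eq_zero hR (DifferentiableOn.diffContOnCl fun z hz ↦ ?_)
  have hzw : z - w ≠ 0 :=
    sub_ne_zero.2 (ne_of_mem_of_not_mem (closure_ball_subset_closedBall hz) hw)
  fun_prop (disch := assumption)

theorem circleIntegrable_multisetSum_sub_inv {s : Multiset ℂ} (hs : ∀ w ∈ s, w ∉ sphere c |R|) :
    CircleIntegrable (fun z ↦ (s.map fun w ↦ (z - w)⁻¹).sum) c R := by
  induction s using Multiset.induction with
  | empty => simp
  | cons w s ih =>
    obtain ⟨hw, hs⟩ := Multiset.forall_mem_cons.1 hs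
    simp only [Multiset.map_cons, Multiset.sum_cons]
    exact (circleIntegrable_sub_inv_iff.2 (.inr hw)).add (ih hs)

theorem circleIntegral_multisetSum_sub_inv (hR : 0 ≤ R) {s : Multiset ℂ}
    (hs : ∀ w ∈ s, w ∉ sphere c R) :
    ∮ z in C(c, R), (s.map fun w ↦ (z - w)⁻¹).sum
      = s.countP (dist · c < R) * (2 * π * I) := by
  induction s using Multiset.induction with
  | empty => simp [circleIntegral]
  | cons w s ih =>
    obtain ⟨hw, hs⟩ := Multiset.forall_mem_cons.1 hs
    simp only [Multiset.map_cons, Multiset.sum_cons]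
    rw [circleIntegral.integral_add, ih hs]
    · by_cases hlt : dist w c < R
      · rw [circleIntegral.integral_sub_inv_of_mem_ball hlt,
          Multiset.countP_cons_of_pos (p := (dist · c < R)) s hlt]
        push_cast
        ring
      · have hw' : w ∉ closedBall c R := fun h ↦ hw (le_antisymm h (not_lt.1 hlt))
        rw [circleIntegral_sub_inv_eq_zero_of_notMem_closedBall hR hw',
          Multiset.countP_cons_of_neg (p := (dist · c < R)) s hlt, zero_add]
    · exact circleIntegrable_sub_inv_iff.2 (.inr (by rwa [abs_of_nonneg hR]))
    · exact circleIntegrable_multisetSum_sub_inv (by rwa [abs_of_nonneg hR])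

theorem circleIntegral_logDeriv_polynomial (hR : 0 ≤ R) {p : ℂ[X]}
    (hp : ∀ z ∈ sphere c R, p.eval z ≠ 0) :
    ∮ z in C(c, R), logDeriv p.eval z = p.roots.countP (dist · c < R) * (2 * π * I) := by
  rw [← circleIntegral_multisetSum_sub_inv hR fun w hw hwR ↦ hp w hwR (isRoot_of_mem_roots hw)]
  refine circleIntegral.integral_congr hR fun z hz ↦ ?_
  simpa [logDeriv_apply] using
    (IsAlgClosed.splits p).eval_derivative_div_eval_of_ne_zero (hp z hz)

theorem HasLogOnCircle.polynomial_eval_ne_zero {p : ℂ[X]} (hR : 0 ≤ R)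
    (h : HasLogOnCircle p.eval c R) {z : ℂ} (hz : z ∈ closedBall c R) : p.eval z ≠ 0 := by
  have hp₀ (w : ℂ) (hw : w ∈ sphere c R) : p.eval w ≠ 0 :=
    h.ne_zero (by rwa [abs_of_nonneg hR])
  intro hpz
  have hzR : dist z c < R := lt_of_le_of_ne hz fun hz' ↦ hp₀ z hz' hpz
  have hcard : p.roots.countP (dist · c < R) = 0 := by
    have hint := (hasLogOnCircle_iff_circleIntegral_logDeriv_eq_zero
      (fun w _ ↦ p.differentiable.analyticAt w) fun _ ↦ h.ne_zero).1 h
    rw [circleIntegral_logDeriv_polynomial hR hp₀] at hint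
    simpa [pi_ne_zero] using hint
  have hp : p ≠ 0 := by
    rintro rfl
    exact hp₀ (c + R) (by simp [abs_of_nonneg hR]) eval_zero
  exact Multiset.countP_eq_zero.1 hcard z ((mem_roots hp).2 hpz) hzR

end Polynomial

end Circle

section Bivariate

open Metric Polynomial Polynomial.Bivariate

section CommSemiring

variable {A : Type*} [CommSemiring A]

theorem continuous_evalEval [TopologicalSpace A] [IsTopologicalSemiring A] (P : A[X][Y]) :
    Continuous fun q : A × A ↦ P.evalEval q.1 q.2 := by
  simp only [evalEval, eval_eq_sum_range (p := P), eval_finsetSum, eval_mul, eval_pow, eval_C]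
  fun_prop

theorem evalEval_swap (P : A[X][Y]) (x y : A) :
    (Bivariate.swap P).evalEval x y = P.evalEval y x := by
  simpa only [coe_aevalAeval_eq_evalEval] using aevalAeval_swap x y P

/-- The divided difference `(p(x) - p(y)) / (x - y)` of a polynomial `p`, as a bivariate polynomial
in `x = C X` and `y = Y`. Expanding `(xⁿ - yⁿ) / (x - y)` as a geometric sum keeps the definition
free of division. -/
noncomputable def dividedDifference (p : A[X]) : A[X][Y] :=
  p.sum fun n a ↦ C (C a) * ∑ i ∈ Finset.range n, C X ^ i * Y ^ (n - 1 - i)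

theorem swap_dividedDifference (p : A[X]) :
    Bivariate.swap (dividedDifference p) = dividedDifference p := by
  simp only [dividedDifference, Polynomial.sum, map_sum, map_mul, map_pow, swap_C_C, swap_X, swap_Y]
  simp only [geom_sum₂_comm]

end CommSemiring

theorem evalEval_dividedDifference_mul_sub {A : Type*} [CommRing A] (p : A[X]) (x y : A) :
    (dividedDifference p).evalEval x y * (x - y) = p.eval x - p.eval y := by
  have hmonomial (n : ℕ) (a : A) :
      (C (C a) * ∑ i ∈ Finset.range n, C X ^ i * Y ^ (n - 1 - i)).evalEval x y * (x - y)
        = a * x ^ n - a * y ^ n := by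
    simp only [evalEval_mul, evalEval_finsetSum, evalEval_pow, evalEval_C, eval_C, eval_X,
      evalEval_X]
    rw [mul_assoc, geom_sum₂_mul, mul_sub]
  rw [eval_eq_sum, eval_eq_sum]
  simp only [dividedDifference, Polynomial.sum, evalEval_finsetSum, Finset.sum_mul, hmonomial,
    Finset.sum_sub_distrib]

theorem evalEval_ne_zero_of_hasLogOnCircle_diag {P : ℂ[X][Y]} {c : ℂ} {R : ℝ}
    (hR : 0 ≤ R) (hP : Bivariate.swap P = P)
    (hP₀ : ∀ x ∈ sphere c R, ∀ y ∈ sphere c R, P.evalEval x y ≠ 0)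
    (hdiag : HasLogOnCircle (fun z ↦ P.evalEval z z) c R) {x y : ℂ}
    (hx : x ∈ closedBall c R) (hy : y ∈ closedBall c R) : P.evalEval x y ≠ 0 := by
  have hsymm (u v : ℂ) : P.evalEval u v = P.evalEval v u := by rw [← evalEval_swap, hP]
  have hcont := continuous_evalEval P
  have hslice (v : ℂ) (hv : v ∈ sphere c R) : HasLogOnCircle (fun z ↦ P.evalEval z v) c R := by
    rw [← abs_of_nonneg hR] at hP₀ hv
    exact hdiag.of_symm_of_diag
      (hcont.comp (by fun_prop : Continuous fun q : ℝ × ℝ ↦ (circleMap c R q.1, circleMap c R q.2)))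
      hP₀ (fun z _ w _ ↦ hsymm z w) hv
  have : PathConnectedSpace (closedBall c R) := isPathConnected_iff_pathConnectedSpace.1 <|
    (convex_closedBall c R).isPathConnected ⟨c, mem_closedBall_self hR⟩
  have hbase : c + R ∈ sphere c R := by simp [abs_of_nonneg hR]
  have hslice' : HasLogOnCircle (fun z ↦ P.evalEval z y) c R :=
    HasLogOnCircle.of_homotopy (F := fun v : closedBall c R ↦ fun z ↦ P.evalEval z v)
      (hcont.comp (by fun_prop : Continuous fun q : closedBall c R × ℝ ↦
        (circleMap c R q.2, (q.1 : ℂ))))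
      (fun v z hz ↦ hsymm z v ▸
        (hslice z (by rwa [abs_of_nonneg hR] at hz)).polynomial_eval_ne_zero hR v.2)
      (x := ⟨c + R, sphere_subset_closedBall hbase⟩) (y := ⟨y, hy⟩) (hslice _ hbase)
  exact hslice'.polynomial_eval_ne_zero hR hx

end Bivariate

section ExteriorMap

open Metric Polynomial Polynomial.Bivariate

section CommRing

variable {A : Type*} [CommRing A]

/-- The difference quotient `(h(z) - h(w)) / (z - w)` of `h(w) = c w + p(1 / w)`, as a polynomial in
the coordinates `x = 1 / z` and `y = 1 / w`, in which `1 / (z - w) = -x y / (x - y)`. -/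
noncomputable def exteriorSlope (c : A) (p : A[X]) : A[X][Y] :=
  C (C c) - C X * Y * dividedDifference p

theorem evalEval_exteriorSlope (c : A) (p : A[X]) (x y : A) :
    (exteriorSlope c p).evalEval x y = c - x * y * (dividedDifference p).evalEval x y := by
  simp [exteriorSlope, evalEval_C]

theorem swap_exteriorSlope (c : A) (p : A[X]) :
    Bivariate.swap (exteriorSlope c p) = exteriorSlope c p := by
  simp only [exteriorSlope, map_sub, map_mul, swap_C_C, swap_X, swap_Y, swap_dividedDifference,
    mul_comm]

end CommRing

/-- The function `w ↦ c w + p(1 / w)`: a Laurent polynomial with at most a simple pole at infinity,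
with value `p(0)` at the junk point `w = 0`. -/
def exteriorMap {K : Type*} [Field K] (c : K) (p : K[X]) (w : K) : K :=
  c * w + p.eval w⁻¹

theorem exteriorMap_sub_exteriorMap {K : Type*} [Field K] (c : K) (p : K[X]) {z w : K}
    (hz : z ≠ 0) (hw : w ≠ 0) :
    exteriorMap c p z - exteriorMap c p w
      = (exteriorSlope c p).evalEval z⁻¹ w⁻¹ * (z - w) := by
  have hinv : z⁻¹ * w⁻¹ * (z - w) = -(z⁻¹ - w⁻¹) := by field_simp; ring
  rw [evalEval_exteriorSlope, exteriorMap, exteriorMap]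
  linear_combination (dividedDifference p).evalEval z⁻¹ w⁻¹ * hinv
    - evalEval_dividedDifference_mul_sub p z⁻¹ w⁻¹

theorem hasDerivAt_exteriorMap {𝕜 : Type*} [NontriviallyNormedField 𝕜] (c : 𝕜) (p : 𝕜[X]) {w : 𝕜}
    (hw : w ≠ 0) :
    HasDerivAt (exteriorMap c p) ((exteriorSlope c p).evalEval w⁻¹ w⁻¹) w := by
  have hcont : ContinuousAt (fun z ↦ (exteriorSlope c p).evalEval z⁻¹ w⁻¹) w :=
    (continuous_evalEval _).continuousAt.comp₂ (continuousAt_inv₀ hw) continuousAt_const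
  refine hasDerivAt_iff_tendsto_slope.2 ((hcont.tendsto.mono_left nhdsWithin_le_nhds).congr' ?_)
  filter_upwards [eventually_ne_nhdsWithin hw, self_mem_nhdsWithin] with z hz hzw
  rw [slope_def_field, exteriorMap_sub_exteriorMap c p hz hw,
    mul_div_cancel_right₀ _ (sub_ne_zero.2 hzw)]

theorem injOn_exteriorMap_and_deriv_ne_zero_iff {𝕜 : Type*} [NontriviallyNormedField 𝕜] {c : 𝕜}
    {p : 𝕜[X]} {S : Set 𝕜} (hS : 0 ∉ S) :
    (S.InjOn (exteriorMap c p) ∧ ∀ w ∈ S, deriv (exteriorMap c p) w ≠ 0) ↔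
      ∀ z ∈ S, ∀ w ∈ S, (exteriorSlope c p).evalEval z⁻¹ w⁻¹ ≠ 0 := by
  have hne {w : 𝕜} (hw : w ∈ S) : w ≠ 0 := ne_of_mem_of_not_mem hw hS
  constructor
  · rintro ⟨hinj, hderiv⟩ z hz w hw hzero
    obtain rfl : z = w := hinj hz hw <| sub_eq_zero.1 <| by
      rw [exteriorMap_sub_exteriorMap c p (hne hz) (hne hw), hzero, zero_mul]
    exact hderiv z hz ((hasDerivAt_exteriorMap c p (hne hz)).deriv.trans hzero)
  · intro hslope
    refine ⟨fun z hz w hw hzw ↦ ?_, fun w hw ↦ ?_⟩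
    · rw [← sub_eq_zero, exteriorMap_sub_exteriorMap c p (hne hz) (hne hw)] at hzw
      exact sub_eq_zero.1 ((mul_eq_zero.1 hzw).resolve_left (hslope z hz w hw))
    · rw [(hasDerivAt_exteriorMap c p (hne hw)).deriv]
      exact hslope w hw w hw

theorem hasLogOnCircle_exteriorSlope_diag {c : ℂ} {p : ℂ[X]}
    (hsmooth : ∀ w ∈ sphere (0 : ℂ) 1, deriv (exteriorMap c p) w ≠ 0)
    (horient : ∮ w in C(0, 1), logDeriv (fun u ↦ u * deriv (exteriorMap c p) u) w
      = 2 * Real.pi * I) :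
    HasLogOnCircle (fun z ↦ (exteriorSlope c p).evalEval z z) 0 1 := by
  have hne {w : ℂ} (hw : w ∈ sphere (0 : ℂ) 1) : w ≠ 0 := ne_of_mem_sphere hw one_ne_zero
  have hdiff : DifferentiableOn ℂ (exteriorMap c p) {0}ᶜ := fun w hw ↦
    (hasDerivAt_exteriorMap c p hw).differentiableAt.differentiableWithinAt
  have hanalytic : AnalyticOnNhd ℂ (deriv (exteriorMap c p)) (sphere 0 1) :=
    (hdiff.analyticOnNhd isOpen_compl_singleton).deriv.mono fun _ ↦ hne
  have hturn := circleIntegral_logDeriv_sub_center_mul one_pos hanalytic hsmooth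
  simp only [sub_zero, horient, left_eq_add] at hturn
  rw [← abs_one] at hanalytic hsmooth
  have hlog := (hasLogOnCircle_iff_circleIntegral_logDeriv_eq_zero hanalytic hsmooth).2 hturn
  rw [← inv_one]
  refine hlog.comp_inv.congr fun z hz ↦ ?_
  have hz₀ : z ≠ 0 := hne (by simpa using hz)
  simpa using (hasDerivAt_exteriorMap c p (inv_ne_zero hz₀)).deriv

theorem stmt_7_general (c : ℂ) (p : ℂ[X])
    (hinj : Set.InjOn (exteriorMap c p) (sphere 0 1))
    (hsmooth : ∀ w ∈ sphere (0 : ℂ) 1, deriv (exteriorMap c p) w ≠ 0)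
    (horient : ∮ w in C(0, 1), logDeriv (fun u ↦ u * deriv (exteriorMap c p) u) w
      = 2 * Real.pi * I) :
    Set.InjOn (exteriorMap c p) {w | 1 ≤ ‖w‖} ∧
      ∀ w, 1 ≤ ‖w‖ → deriv (exteriorMap c p) w ≠ 0 := by
  have htorus : ∀ u ∈ sphere (0 : ℂ) 1, ∀ v ∈ sphere (0 : ℂ) 1,
      (exteriorSlope c p).evalEval u v ≠ 0 := by
    intro u hu v hv
    simpa using (injOn_exteriorMap_and_deriv_ne_zero_iff (by simp)).1 ⟨hinj, hsmooth⟩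
      u⁻¹ (by simpa using hu) v⁻¹ (by simpa using hv)
  refine (injOn_exteriorMap_and_deriv_ne_zero_iff (by simp)).2 fun z hz w hw ↦ ?_
  exact evalEval_ne_zero_of_hasLogOnCircle_diag zero_le_one (swap_exteriorSlope c p)
    htorus (hasLogOnCircle_exteriorSlope_diag hsmooth horient)
    (by simpa using inv_le_one_of_one_le₀ hz) (by simpa using inv_le_one_of_one_le₀ hw)

end ExteriorMap

/-- If `h(w) = rw + Σ_{j=0}^d a_j w^{-j}` with `r > 0`, `a_d ≠ 0` parametrizes a positively
oriented smooth simple closed curve on the unit circle (simple: injective there; smooth: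
nonvanishing tangent `t(w) = i w h'(w)`; positively oriented: the tangent winds once, i.e.
`(1/2πi) ∮_{|w|=1} t'(w)/t(w) dw = 1`), then `h` is injective on `{|w| ≥ 1}` and `h'(w) ≠ 0`
for `|w| ≥ 1`; in particular `h` restricts to a biholomorphism from the exterior of the unit
disc onto the exterior of the curve. -/
theorem stmt_7 (d : ℕ) (r : ℝ) (hr : 0 < r) (a : Fin (d + 1) → ℂ)
    (had : a (Fin.last d) ≠ 0)
    (h : ℂ → ℂ)
    (hh : h = fun w : ℂ => (r : ℂ) * w + ∑ j : Fin (d + 1), a j * w ^ (-(j : ℤ)))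
    (hinj : Set.InjOn h (Metric.sphere (0 : ℂ) 1))
    (hsmooth : ∀ w ∈ Metric.sphere (0 : ℂ) 1, deriv h w ≠ 0)
    (horient : (∮ w in C(0, 1),
        deriv (fun u : ℂ => u * deriv h u) w / (w * deriv h w)) = 2 * Real.pi * I) :
    Set.InjOn h {w : ℂ | 1 ≤ ‖w‖} ∧ ∀ w : ℂ, 1 ≤ ‖w‖ → deriv h w ≠ 0 := by
  obtain rfl : h = exteriorMap (r : ℂ) (∑ j, Polynomial.C (a j) * Polynomial.X ^ (j : ℕ)) := by
    rw [hh]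
    funext w
    simp [exteriorMap, Polynomial.eval_finsetSum]
  exact stmt_7_general _ _ hinj hsmooth horient
end
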